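/- Let f satisfy Condition B with constant K, let φ be a branching mechanism (with Lévy measure m) satisfying Grey's condition, let ψ be an immigration mechanism (with immigration measure ν), and suppose ∫_{(1,∞)} zⁿ (m+ν)(dz) < ∞ for every integer n ≥ 1. Let (Q^γ_t)_{t≥0} be the transition semigroup of the CBI-process with branching mechanism φ and immigration mechanism ψ. Then for every x ≥ 0, the function t ↦ ∫_{[0,∞)} f(z) Q^γ_t(x,dz) is finite for every t ≥ 0 and locally bounded on [0,∞). -/

import Mathlib

open MeasureTheory Set Filter

noncomputable section

/-- A positive continuous function on `[0,∞)` satisfying Condition A: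
there exist `c ≥ 0` and `K > 0` such that `f` is convex on `[c,∞)`,
`f (x*y) ≤ K * f x * f y` for `x, y ∈ [c,∞)`, and `f` is bounded on `[0,c)`. -/
def ConditionA (f : ℝ → ℝ) : Prop :=
  ContinuousOn f (Set.Ici 0) ∧ (∀ x, 0 ≤ x → 0 < f x) ∧
  ∃ c, 0 ≤ c ∧ ∃ K, 0 < K ∧
    ConvexOn ℝ (Set.Ici c) f ∧
    (∀ x y, c ≤ x → c ≤ y → f (x * y) ≤ K * f x * f y) ∧
    ∃ M, ∀ x, 0 ≤ x → x < c → f x ≤ M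

/-- Condition B with constant `K`: `f` is convex and nondecreasing on `[0,∞)`,
submultiplicative up to the constant `K`, and `f > 1` on `[0,∞)`. -/
def ConditionB (f : ℝ → ℝ) (K : ℝ) : Prop :=
  0 < K ∧ ConvexOn ℝ (Set.Ici 0) f ∧ MonotoneOn f (Set.Ici 0) ∧
  (∀ x y, 0 ≤ x → 0 ≤ y → f (x * y) ≤ K * f x * f y) ∧
  (∀ x, 0 ≤ x → 1 < f x)

/-- `φ` is a branching mechanism with parameters `β ∈ ℝ`, `σ ≥ 0` and Lévy
measure `m` (a σ-finite measure carried by `(0,∞)` with `∫ 1 ∧ z² m(dz) < ∞`):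
`φ(λ) = βλ + σ²λ²/2 + ∫ (e^{-zλ} - 1 + zλ 1_{z ≤ 1}) m(dz)`. -/
structure IsBranchingMechanism (φ : ℝ → ℝ) (β σ : ℝ) (m : Measure ℝ) : Prop where
  sigma_nonneg : 0 ≤ σ
  sigmaFinite : SigmaFinite m
  carrier : m (Set.Iic 0) = 0
  levy_finite : ∫⁻ z, ENNReal.ofReal (min 1 (z ^ 2)) ∂m < ⊤
  form : ∀ l, 0 ≤ l →
    φ l = β * l + σ ^ 2 * l ^ 2 / 2
      + ∫ z, (Real.exp (-(z * l)) - 1 + (if z ≤ 1 then z * l else 0)) ∂m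

/-- Grey's condition: `∫_{0+} φ(λ)⁻¹ dλ = ∞`, i.e. `φ⁻¹` fails to be
integrable on every right neighbourhood of `0`. -/
def GreyCondition (φ : ℝ → ℝ) : Prop :=
  ∀ ε, 0 < ε → ¬ IntegrableOn (fun l => (φ l)⁻¹) (Set.Ioo 0 ε) volume

/-- `v t l` is the nonnegative solution of `v_t(λ) = λ - ∫_0^t φ(v_s(λ)) ds`. -/
def IsCumulant (φ : ℝ → ℝ) (v : ℝ → ℝ → ℝ) : Prop :=
  ∀ l, 0 ≤ l → ∀ t, 0 ≤ t →
    0 ≤ v t l ∧ v t l = l - ∫ s in (0:ℝ)..t, φ (v s l)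

/-- `(Q t)_{t ≥ 0}` is the transition semigroup of the CB-process with cumulant
`v`: each `Q t x` is a probability measure on `[0,∞)` with Laplace transform
`∫ e^{-λ y} Q_t(x, dy) = e^{-x v_t(λ)}`. -/
def IsCBSemigroup (v : ℝ → ℝ → ℝ) (Q : ℝ → ℝ → Measure ℝ) : Prop :=
  ∀ t x, 0 ≤ t → 0 ≤ x →
    IsProbabilityMeasure (Q t x) ∧ Q t x (Set.Iio 0) = 0 ∧
    ∀ l, 0 ≤ l → ∫ y, Real.exp (-(l * y)) ∂(Q t x) = Real.exp (-(x * v t l))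

/-- `ψ` is an immigration mechanism with drift `h ≥ 0` and immigration measure
`ν` (a σ-finite measure carried by `(0,∞)` with `∫ 1 ∧ z ν(dz) < ∞`):
`ψ(λ) = hλ + ∫ (1 - e^{-λz}) ν(dz)`. -/
structure IsImmigrationMechanism (ψ : ℝ → ℝ) (h : ℝ) (ν : Measure ℝ) : Prop where
  h_nonneg : 0 ≤ h
  sigmaFinite : SigmaFinite ν
  carrier : ν (Set.Iic 0) = 0
  levy_finite : ∫⁻ z, ENNReal.ofReal (min 1 z) ∂ν < ⊤
  form : ∀ l, 0 ≤ l → ψ l = h * l + ∫ z, (1 - Real.exp (-(l * z))) ∂ν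

/-- `(Q^γ t)_{t ≥ 0}` is the transition semigroup of the CBI-process with
cumulant `v` and immigration mechanism `ψ`: each `Qγ t x` is a probability
measure on `[0,∞)` with Laplace transform
`∫ e^{-λ y} Q^γ_t(x, dy) = exp(-x v_t(λ) - ∫_0^t ψ(v_s(λ)) ds)`. -/
def IsCBISemigroup (v : ℝ → ℝ → ℝ) (ψ : ℝ → ℝ) (Qγ : ℝ → ℝ → Measure ℝ) : Prop :=
  ∀ t x, 0 ≤ t → 0 ≤ x →
    IsProbabilityMeasure (Qγ t x) ∧ Qγ t x (Set.Iio 0) = 0 ∧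
    ∀ l, 0 ≤ l →
      ∫ y, Real.exp (-(l * y)) ∂(Qγ t x)
        = Real.exp (-(x * v t l) - ∫ s in (0:ℝ)..t, ψ (v s l))

/-- evaluation of a polynomial with coefficients continuous in `t` -/
def PE (p : Polynomial C(ℝ, ℝ)) (t l : ℝ) : ℝ := (p.eval (ContinuousMap.const ℝ l)) t

lemma PE_add (p q : Polynomial C(ℝ, ℝ)) (t l : ℝ) : PE (p + q) t l = PE p t l + PE q t l := by
  simp [PE]
lemma PE_mul (p q : Polynomial C(ℝ, ℝ)) (t l : ℝ) : PE (p * q) t l = PE p t l * PE q t l := by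
  simp [PE]
lemma PE_pow (p : Polynomial C(ℝ, ℝ)) (n : ℕ) (t l : ℝ) : PE (p ^ n) t l = PE p t l ^ n := by
  simp [PE]
lemma PE_C (a : C(ℝ, ℝ)) (t l : ℝ) : PE (Polynomial.C a) t l = a t := by
  simp [PE]
lemma PE_X (t l : ℝ) : PE Polynomial.X t l = l := by
  simp [PE]
lemma PE_zero (t l : ℝ) : PE 0 t l = 0 := by
  simp [PE]
lemma PE_monomial (n : ℕ) (a : C(ℝ, ℝ)) (t l : ℝ) :
    PE (Polynomial.monomial n a) t l = a t * l ^ n := by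
  simp [PE]
lemma PE_cont (p : Polynomial C(ℝ, ℝ)) (l : ℝ) : Continuous (fun t => PE p t l) :=
  (p.eval (ContinuousMap.const ℝ l)).continuous

lemma cm_bdd (a : C(ℝ, ℝ)) (T : ℝ) : ∃ C, 0 ≤ C ∧ ∀ t ∈ Icc (0:ℝ) T, |a t| ≤ C := by
  obtain ⟨C, hC⟩ := isCompact_Icc.exists_bound_of_continuousOn
    (s := Icc (0:ℝ) T) (f := fun t => a t) a.continuous.continuousOn
  exact ⟨max C 0, le_max_right _ _, fun t ht => (hC t ht).trans (le_max_left _ _)⟩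

lemma PE_bdd (T : ℝ) (p : Polynomial C(ℝ, ℝ)) :
    ∃ C, 0 ≤ C ∧ ∀ t ∈ Icc (0:ℝ) T, ∀ l ∈ Icc (0:ℝ) 1, |PE p t l| ≤ C := by
  induction p using Polynomial.induction_on' with
  | add p q hp hq =>
    obtain ⟨C, hC, h1⟩ := hp
    obtain ⟨D, hD, h2⟩ := hq
    refine ⟨C + D, by positivity, fun t ht l hl => ?_⟩
    rw [PE_add]
    exact (abs_add_le _ _).trans (add_le_add (h1 t ht l hl) (h2 t ht l hl))
  | monomial n a =>
    obtain ⟨C, hC, h1⟩ := cm_bdd a T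
    refine ⟨C, hC, fun t ht l hl => ?_⟩
    rw [PE_monomial, abs_mul, abs_of_nonneg (pow_nonneg hl.1 n)]
    calc |a t| * l ^ n ≤ C * 1 := by
          have := h1 t ht
          have := pow_le_one₀ (n := n) hl.1 hl.2
          have := pow_nonneg hl.1 n
          gcongr
      _ = C := mul_one C

lemma PE_int (p : Polynomial C(ℝ, ℝ)) :
    ∃ q : Polynomial C(ℝ, ℝ), ∀ t l, PE q t l = ∫ s in (0:ℝ)..t, PE p s l := by
  induction p using Polynomial.induction_on' with
  | add p q hp hq =>
    obtain ⟨p', h1⟩ := hp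
    obtain ⟨q', h2⟩ := hq
    refine ⟨p' + q', fun t l => ?_⟩
    simp_rw [PE_add]
    rw [intervalIntegral.integral_add ((PE_cont _ _).intervalIntegrable _ _)
      ((PE_cont _ _).intervalIntegrable _ _), h1, h2]
  | monomial n a =>
    refine ⟨Polynomial.monomial n ⟨fun t => ∫ s in (0:ℝ)..t, a s,
      intervalIntegral.continuous_primitive (fun _ _ => a.continuous.intervalIntegrable _ _) 0⟩,
      fun t l => ?_⟩
    simp_rw [PE_monomial]
    rw [intervalIntegral.integral_mul_const]
    rfl

/-- n-th forward difference at `0` with step `h` -/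
def FD (n : ℕ) (h : ℝ) (F : ℝ → ℝ) : ℝ :=
  ∑ k ∈ Finset.range (n + 1), (((-1 : ℤ) ^ (n - k) * (n.choose k : ℤ) : ℤ) : ℝ) * F (k * h)

lemma FD_pow_lt {n k : ℕ} (hk : k < n) (h : ℝ) : FD n h (fun l => l ^ k) = 0 := by
  have h1 : (fwdDiff (1:ℝ))^[n] (fun l : ℝ => l ^ k) 0 = 0 := by
    rw [fwdDiff_iter_pow_eq_zero_of_lt hk]; rfl
  rw [fwdDiff_iter_eq_sum_shift] at h1
  have : FD n h (fun l => l ^ k) = h ^ k * 0 := by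
    rw [← h1, FD, Finset.mul_sum]
    refine Finset.sum_congr rfl fun j _ => ?_
    simp [mul_pow]
    ring
  simpa using this

lemma FD_abs_le (n : ℕ) : ∃ A : ℝ, 0 ≤ A ∧ ∀ (h : ℝ) (F : ℝ → ℝ) (M : ℝ),
    (∀ k : ℕ, k ≤ n → |F (k * h)| ≤ M) → |FD n h F| ≤ A * M := by
  refine ⟨∑ k ∈ Finset.range (n + 1), |(((-1 : ℤ) ^ (n - k) * (n.choose k : ℤ) : ℤ) : ℝ)|,
    Finset.sum_nonneg fun _ _ => abs_nonneg _, fun h F M hM => ?_⟩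
  rw [FD, Finset.sum_mul]
  refine (Finset.abs_sum_le_sum_abs _ _).trans (Finset.sum_le_sum fun k hk => ?_)
  rw [abs_mul]
  exact mul_le_mul_of_nonneg_left (hM k (by simp at hk; omega)) (abs_nonneg _)

lemma FD_add (n : ℕ) (h : ℝ) (F G : ℝ → ℝ) : FD n h (fun l => F l + G l) = FD n h F + FD n h G := by
  simp [FD, mul_add, Finset.sum_add_distrib]

lemma FD_const_mul (n : ℕ) (h c : ℝ) (F : ℝ → ℝ) : FD n h (fun l => c * F l) = c * FD n h F := by
  rw [FD, FD, Finset.mul_sum]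
  exact Finset.sum_congr rfl fun _ _ => by ring

lemma FD_PE (n : ℕ) (T : ℝ) (p : Polynomial C(ℝ, ℝ)) :
    ∃ C, 0 ≤ C ∧ ∀ t ∈ Icc (0:ℝ) T, ∀ h ∈ Icc (0:ℝ) 1, |FD n h (PE p t)| ≤ C * h ^ n := by
  induction p using Polynomial.induction_on' with
  | add p q hp hq =>
    obtain ⟨C, hC, h1⟩ := hp
    obtain ⟨D, hD, h2⟩ := hq
    refine ⟨C + D, by positivity, fun t ht l hl => ?_⟩
    have : PE (p + q) t = fun l => PE p t l + PE q t l := funext fun l => PE_add _ _ _ _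
    rw [this, FD_add, add_mul]
    exact (abs_add_le _ _).trans (add_le_add (h1 t ht l hl) (h2 t ht l hl))
  | monomial k a =>
    obtain ⟨C, hC, h1⟩ := cm_bdd a T
    obtain ⟨A, hA, h2⟩ := FD_abs_le n
    refine ⟨C * (A * n ^ k), by positivity, fun t ht l hl => ?_⟩
    have : PE (Polynomial.monomial k a) t = fun l => a t * l ^ k :=
      funext fun l => PE_monomial _ _ _ _
    rw [this, FD_const_mul]
    have hl0 := hl.1
    by_cases hk : k < n
    · rw [FD_pow_lt hk]; simp; positivity
    · push Not at hk
      rw [abs_mul]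
      have h3 : |FD n l (fun l => l ^ k)| ≤ A * (n * l) ^ k := by
        refine h2 l _ _ fun j hj => ?_
        rw [abs_of_nonneg (by positivity)]
        gcongr
      have h4 : l ^ k ≤ l ^ n := pow_le_pow_of_le_one hl.1 hl.2 hk
      calc |a t| * |FD n l (fun l => l ^ k)| ≤ C * (A * (n * l) ^ k) := by
            gcongr
            exact h1 t ht
        _ = C * (A * n ^ k) * l ^ k := by ring
        _ ≤ _ := by gcongr

/-- `F` has an expansion to order `n` in `l` uniformly in `t`. -/
def Ex (T : ℝ) (n : ℕ) (F : ℝ → ℝ → ℝ) : Prop :=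
  ∃ p : Polynomial C(ℝ, ℝ), ∃ C, 0 ≤ C ∧ ∀ t ∈ Icc (0:ℝ) T, ∀ l ∈ Icc (0:ℝ) 1,
    |F t l - PE p t l| ≤ C * l ^ n

lemma Ex.FD {T : ℝ} {n : ℕ} {F : ℝ → ℝ → ℝ} (hF : Ex T n F) :
    ∃ C, 0 ≤ C ∧ ∀ t ∈ Icc (0:ℝ) T, ∀ h : ℝ, 0 ≤ h → (n + 1) * h ≤ 1 → |FD n h (F t)| ≤ C * h ^ n := by
  obtain ⟨p, C, hC, hp⟩ := hF
  obtain ⟨D, hD, h2⟩ := FD_PE n T p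
  obtain ⟨A, hA, h3⟩ := FD_abs_le n
  refine ⟨A * (C * n ^ n) + D, by positivity, fun t ht h h0 h1 => ?_⟩
  have e : F t = fun l => (F t l - PE p t l) + PE p t l := by ext l; ring
  rw [e, FD_add, add_mul]
  refine (abs_add_le _ _).trans (add_le_add ?_ (h2 t ht h ⟨h0, ?_⟩))
  · have := h3 h (fun l => F t l - PE p t l) (C * (n * h) ^ n) (fun k hk => ?_)
    · refine this.trans (le_of_eq ?_); ring
    · have hk' : (k:ℝ) ≤ n := by exact_mod_cast hk
      have hk2 : (k:ℝ) * h ≤ n * h := by gcongr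
      refine (hp t ht _ ⟨by positivity, by nlinarith⟩).trans ?_
      gcongr
  · have : (0:ℝ) ≤ n * h := by positivity
    nlinarith

lemma Ex.congr {T : ℝ} {n : ℕ} {F G : ℝ → ℝ → ℝ} (hF : Ex T n F)
    (h : ∀ t ∈ Icc (0:ℝ) T, ∀ l ∈ Icc (0:ℝ) 1, |G t l - F t l| ≤ 0) : Ex T n G := by
  obtain ⟨p, C, hC, hp⟩ := hF
  refine ⟨p, C, hC, fun t ht l hl => ?_⟩
  have : G t l = F t l := by
    have := abs_nonpos_iff.1 (h t ht l hl); linarith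
  rw [this]; exact hp t ht l hl

lemma Ex.near {T : ℝ} {n : ℕ} {F G : ℝ → ℝ → ℝ} (hF : Ex T n F) (D : ℝ) (hD : 0 ≤ D)
    (h : ∀ t ∈ Icc (0:ℝ) T, ∀ l ∈ Icc (0:ℝ) 1, |G t l - F t l| ≤ D * l ^ n) : Ex T n G := by
  obtain ⟨p, C, hC, hp⟩ := hF
  refine ⟨p, D + C, by positivity, fun t ht l hl => ?_⟩
  rw [add_mul]
  exact (abs_sub_le _ _ _).trans (add_le_add (h t ht l hl) (hp t ht l hl))

lemma Ex.poly (T : ℝ) (n : ℕ) (p : Polynomial C(ℝ, ℝ)) : Ex T n (PE p) :=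
  ⟨p, 0, le_rfl, fun t _ l _ => by simp⟩

lemma Ex.add {T : ℝ} {n : ℕ} {F G : ℝ → ℝ → ℝ} (hF : Ex T n F) (hG : Ex T n G) :
    Ex T n (fun t l => F t l + G t l) := by
  obtain ⟨p, C, hC, hp⟩ := hF
  obtain ⟨q, D, hD, hq⟩ := hG
  refine ⟨p + q, C + D, by positivity, fun t ht l hl => ?_⟩
  rw [PE_add, add_mul, add_sub_add_comm]
  exact (abs_add_le _ _).trans (add_le_add (hp t ht l hl) (hq t ht l hl))

lemma Ex.mul {T : ℝ} {n : ℕ} {F G : ℝ → ℝ → ℝ} (hF : Ex T n F) (hG : Ex T n G) :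
    Ex T n (fun t l => F t l * G t l) := by
  obtain ⟨p, C, hC, hp⟩ := hF
  obtain ⟨q, D, hD, hq⟩ := hG
  obtain ⟨P, hP, hp'⟩ := PE_bdd T p
  obtain ⟨Q, hQ, hq'⟩ := PE_bdd T q
  refine ⟨p * q, C * (Q + D) + P * D, by positivity, fun t ht l hl => ?_⟩
  have h1 := hp t ht l hl
  have h2 := hq t ht l hl
  have hl0 := hl.1
  have hln : l ^ n ≤ 1 := pow_le_one₀ hl.1 hl.2
  have hG : |G t l| ≤ Q + D := by
    have : G t l = PE q t l + (G t l - PE q t l) := by ring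
    rw [this]
    refine (abs_add_le _ _).trans (add_le_add (hq' t ht l hl) (h2.trans ?_))
    exact mul_le_of_le_one_right hD hln
  have e : F t l * G t l - PE p t l * PE q t l
    = (F t l - PE p t l) * G t l + PE p t l * (G t l - PE q t l) := by ring
  rw [PE_mul, e]
  refine (abs_add_le _ _).trans ?_
  rw [abs_mul, abs_mul]
  calc |F t l - PE p t l| * |G t l| + |PE p t l| * |G t l - PE q t l|
      ≤ (C * l ^ n) * (Q + D) + P * (D * l ^ n) := by
        gcongr
        exact hp' t ht l hl
    _ = _ := by ring

lemma Ex.coef (T : ℝ) (n : ℕ) (a : C(ℝ, ℝ)) : Ex T n (fun t _ => a t) := by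
  have := Ex.poly T n (Polynomial.C a)
  refine this.congr fun t _ l _ => by simp [PE_C]

lemma Ex.const (T : ℝ) (n : ℕ) (a : ℝ) : Ex T n (fun _ _ => a) :=
  Ex.coef T n (ContinuousMap.const ℝ a)

lemma Ex.var (T : ℝ) (n : ℕ) : Ex T n (fun _ l => l) := by
  have := Ex.poly T n Polynomial.X
  refine this.congr fun t _ l _ => by simp [PE_X]

lemma Ex.sum {T : ℝ} {n : ℕ} (N : ℕ) (F : ℕ → ℝ → ℝ → ℝ) (hF : ∀ k, Ex T n (F k)) :
    Ex T n (fun t l => ∑ k ∈ Finset.range N, F k t l) := by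
  induction N with
  | zero => simpa using Ex.const T n 0
  | succ N ih => simp_rw [Finset.sum_range_succ]; exact ih.add (hF N)

lemma Ex.pow {T : ℝ} {n : ℕ} {F : ℝ → ℝ → ℝ} (hF : Ex T n F) (k : ℕ) :
    Ex T n (fun t l => F t l ^ k) := by
  induction k with
  | zero => simpa using Ex.const T n 1
  | succ N ih => simp_rw [pow_succ]; exact ih.mul hF

lemma Ex.int {T : ℝ} {n : ℕ} {F : ℝ → ℝ → ℝ} (hF : Ex T n F)
    (hi : ∀ t ∈ Icc (0:ℝ) T, ∀ l ∈ Icc (0:ℝ) 1,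
      IntervalIntegrable (fun s => F s l) volume 0 t) :
    Ex T n (fun t l => ∫ s in (0:ℝ)..t, F s l) := by
  obtain ⟨p, C, hC, hp⟩ := hF
  obtain ⟨q, hq⟩ := PE_int p
  refine ⟨q, C * |T|, by positivity, fun t ht l hl => ?_⟩
  rw [hq, ← intervalIntegral.integral_sub (hi t ht l hl) ((PE_cont _ _).intervalIntegrable _ _)]
  have := intervalIntegral.norm_integral_le_of_norm_le_const (a := 0) (b := t) (C := C * l ^ n)
    (f := fun s => F s l - PE p s l) (fun s hs => ?_)
  · refine this.trans ?_
    have hl0 := hl.1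
    have : |t - 0| ≤ |T| := by
      rw [sub_zero, abs_of_nonneg ht.1]; exact ht.2.trans (le_abs_self T)
    calc C * l ^ n * |t - 0| ≤ C * l ^ n * |T| := by gcongr
      _ = _ := by ring
  · rw [uIoc_of_le ht.1] at hs
    exact hp s ⟨hs.1.le, hs.2.trans ht.2⟩ l hl

lemma Ex.pow_gain {T : ℝ} {n : ℕ} {F : ℝ → ℝ → ℝ} (hF : Ex T (n + 1) F) (B : ℝ) (hB : 0 ≤ B)
    (hb : ∀ t ∈ Icc (0:ℝ) T, ∀ l ∈ Icc (0:ℝ) 1, |F t l| ≤ B * l) (k : ℕ) :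
    Ex T (n + 2) (fun t l => F t l ^ (k + 2)) := by
  obtain ⟨p, C, hC, hp⟩ := hF
  have hpb : ∀ t ∈ Icc (0:ℝ) T, ∀ l ∈ Icc (0:ℝ) 1, |PE p t l| ≤ (B + C) * l := by
    intro t ht l hl
    have h1 := hp t ht l hl
    have hln : l ^ (n + 1) ≤ l := by
      simpa using pow_le_pow_of_le_one hl.1 hl.2 (Nat.succ_le_succ (Nat.zero_le n))
    have e : PE p t l = F t l - (F t l - PE p t l) := by ring
    rw [e, add_mul]
    refine (abs_sub _ _).trans (add_le_add (hb t ht l hl) (h1.trans ?_))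
    gcongr
  have key : ∀ j : ℕ, ∃ D, 0 ≤ D ∧ ∀ t ∈ Icc (0:ℝ) T, ∀ l ∈ Icc (0:ℝ) 1,
      |F t l ^ (j + 1) - PE p t l ^ (j + 1)| ≤ D * l ^ (n + 1 + j) := by
    intro j
    induction j with
    | zero => exact ⟨C, hC, fun t ht l hl => by simpa using hp t ht l hl⟩
    | succ j ih =>
      obtain ⟨D, hD, h⟩ := ih
      refine ⟨B ^ (j + 1) * C + D * (B + C), by positivity, fun t ht l hl => ?_⟩
      have hl0 := hl.1
      have e : F t l ^ (j + 1 + 1) - PE p t l ^ (j + 1 + 1)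
        = F t l ^ (j + 1) * (F t l - PE p t l)
          + (F t l ^ (j + 1) - PE p t l ^ (j + 1)) * PE p t l := by ring
      rw [e]
      refine (abs_add_le _ _).trans ?_
      rw [abs_mul, abs_mul, abs_pow]
      have h1 := hp t ht l hl
      have h2 := h t ht l hl
      have h3 := hb t ht l hl
      have h4 := hpb t ht l hl
      calc _ ≤ (B * l) ^ (j + 1) * (C * l ^ (n + 1)) + D * l ^ (n + 1 + j) * ((B + C) * l) := by
            gcongr
        _ = _ := by ring
  obtain ⟨D, hD, h⟩ := key (k + 1)
  refine ⟨p ^ (k + 2), D, hD, fun t ht l hl => ?_⟩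
  rw [PE_pow]
  refine (h t ht l hl).trans ?_
  gcongr D * ?_
  exact pow_le_pow_of_le_one hl.1 hl.2 (by omega)

lemma exp_tay_real (w : ℝ) (n : ℕ) :
    |Real.exp w - ∑ k ∈ Finset.range n, w ^ k / (k.factorial : ℝ)| ≤ |w| ^ n * Real.exp |w| := by
  have := Complex.norm_exp_sub_sum_le_norm_mul_exp (w : ℂ) n
  have e : Complex.exp (w : ℂ) - ∑ k ∈ Finset.range n, (w : ℂ) ^ k / (k.factorial : ℂ)
    = ((Real.exp w - ∑ k ∈ Finset.range n, w ^ k / (k.factorial : ℝ) : ℝ) : ℂ) := by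
    push_cast; rfl
  rw [e, Complex.norm_real, Complex.norm_real] at this
  simpa using this

/-- Taylor remainder of `exp (-x)` -/
def RT (r : ℕ) (x : ℝ) : ℝ :=
  Real.exp (-x) - ∑ k ∈ Finset.range r, (-x) ^ k / (k.factorial : ℝ)

lemma RT_cont (r : ℕ) : Continuous (RT r) := by
  unfold RT; fun_prop

lemma RT_bd (r : ℕ) : ∃ C, 0 ≤ C ∧ ∀ x, 0 ≤ x → |RT r x| ≤ C * x ^ r := by
  refine ⟨Real.exp 1 + 1 + r, by positivity, fun x hx => ?_⟩
  have hxr : 0 ≤ x ^ r := by positivity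
  rcases le_total x 1 with h | h
  · have := exp_tay_real (-x) r
    rw [abs_neg, abs_of_nonneg hx] at this
    refine this.trans ?_
    have h2 : Real.exp x ≤ Real.exp 1 := Real.exp_le_exp.2 h
    have h3 : (0:ℝ) ≤ r := by positivity
    rw [mul_comm]
    gcongr
    linarith
  · unfold RT
    refine (abs_sub _ _).trans ?_
    have h1 : |Real.exp (-x)| ≤ 1 * x ^ r := by
      rw [abs_of_pos (Real.exp_pos _), one_mul]
      exact (Real.exp_le_one_iff.2 (by linarith)).trans (one_le_pow₀ h)
    have h2 : |∑ k ∈ Finset.range r, (-x) ^ k / (k.factorial : ℝ)| ≤ r * x ^ r := by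
      refine (Finset.abs_sum_le_sum_abs _ _).trans ?_
      have : ∀ k ∈ Finset.range r, |(-x) ^ k / (k.factorial : ℝ)| ≤ x ^ r := by
        intro k hk
        rw [abs_div, abs_pow, abs_neg, abs_of_nonneg hx, Nat.abs_cast]
        have h4 : (1:ℝ) ≤ k.factorial := by exact_mod_cast Nat.factorial_pos k
        refine (div_le_self (by positivity) h4).trans ?_
        exact pow_le_pow_right₀ h (by simp at hk; omega)
      refine (Finset.sum_le_sum this).trans ?_
      simp
    have : 0 ≤ Real.exp 1 * x ^ r := by positivity
    nlinarith

/-- Taylor expansion at zero to any order, starting at degree `r`. -/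
def HasTay (r : ℕ) (G : ℝ → ℝ) : Prop :=
  ContinuousOn G (Ici 0) ∧ ∀ N : ℕ, ∃ c : ℕ → ℝ, ∃ C, 0 ≤ C ∧ ∀ u, 0 ≤ u →
    |G u - ∑ k ∈ Finset.range (N + 1), c k * u ^ (k + r)| ≤ C * u ^ (N + 1 + r)

lemma HasTay.add {r : ℕ} {G H : ℝ → ℝ} (hG : HasTay r G) (hH : HasTay r H) :
    HasTay r (fun u => G u + H u) := by
  refine ⟨hG.1.add hH.1, fun N => ?_⟩
  obtain ⟨c, C, hC, h1⟩ := hG.2 N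
  obtain ⟨d, D, hD, h2⟩ := hH.2 N
  refine ⟨fun k => c k + d k, C + D, by positivity, fun u hu => ?_⟩
  simp_rw [add_mul, Finset.sum_add_distrib]
  rw [add_sub_add_comm]
  exact (abs_add_le _ _).trans (add_le_add (h1 u hu) (h2 u hu))

lemma HasTay.neg {r : ℕ} {G : ℝ → ℝ} (hG : HasTay r G) : HasTay r (fun u => - G u) := by
  refine ⟨hG.1.neg, fun N => ?_⟩
  obtain ⟨c, C, hC, h1⟩ := hG.2 N
  refine ⟨fun k => - c k, C, hC, fun u hu => ?_⟩
  simp_rw [neg_mul, Finset.sum_neg_distrib]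
  rw [neg_sub_neg, abs_sub_comm]
  exact h1 u hu

lemma HasTay.monom (r : ℕ) (a : ℝ) : HasTay r (fun u => a * u ^ r) := by
  refine ⟨by fun_prop, fun N => ⟨fun k => if k = 0 then a else 0, 0, le_rfl, fun u hu => ?_⟩⟩
  simp

lemma HasTay.congr {r : ℕ} {G H : ℝ → ℝ} (hG : HasTay r G) (h : ∀ u, 0 ≤ u → H u = G u) :
    HasTay r H := by
  refine ⟨hG.1.congr fun u hu => h u hu, fun N => ?_⟩
  obtain ⟨c, C, hC, h1⟩ := hG.2 N
  exact ⟨c, C, hC, fun u hu => by rw [h u hu]; exact h1 u hu⟩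

lemma mom_int (r : ℕ) (μ : Measure ℝ) (hc : μ (Iic 0) = 0)
    (h1 : ∫⁻ z, ENNReal.ofReal (min 1 (z ^ r)) ∂μ < ⊤) (n : ℕ) (hn : r ≤ n)
    (h2 : ∫⁻ z in Ioi 1, ENNReal.ofReal (z ^ n) ∂μ < ⊤) :
    Integrable (fun z : ℝ => z ^ n) μ := by
  have hpos : ∀ᵐ z ∂μ, 0 < z := by
    rw [ae_iff]; simpa [Iic] using hc
  refine ⟨by fun_prop, ?_⟩
  rw [hasFiniteIntegral_iff_ofReal (by filter_upwards [hpos] with z hz; positivity)]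
  rw [← lintegral_indicator measurableSet_Ioi] at h2
  refine lt_of_le_of_lt ?_ (ENNReal.add_lt_top.2 ⟨h1, h2⟩)
  rw [← lintegral_add_left (by fun_prop)]
  refine lintegral_mono_ae ?_
  filter_upwards [hpos] with z hz
  by_cases h : 1 < z
  · rw [indicator_of_mem (show z ∈ Ioi 1 from h)]
    exact le_add_self
  · push Not at h
    refine le_add_right (ENNReal.ofReal_le_ofReal (le_min (pow_le_one₀ hz.le h) ?_))
    exact pow_le_pow_of_le_one hz.le h hn

lemma RT_int (r : ℕ) (μ : Measure ℝ) (hpos : ∀ᵐ z ∂μ, 0 < z) (n : ℕ)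
    (hi : Integrable (fun z : ℝ => z ^ n) μ) (u : ℝ) (hu : 0 ≤ u) :
    Integrable (fun z => RT n (z * u)) μ := by
  obtain ⟨C, hC, h⟩ := RT_bd n
  refine ((hi.const_mul (C * u ^ n))).mono'
    (((RT_cont n).comp (by fun_prop : Continuous fun z : ℝ => z * u)).aestronglyMeasurable) ?_
  filter_upwards [hpos] with z hz
  refine (h (z * u) (by positivity)).trans (le_of_eq ?_)
  rw [mul_pow]; ring

lemma RT_tay (r : ℕ) (μ : Measure ℝ) (hpos : ∀ᵐ z ∂μ, 0 < z)
    (hi : ∀ n, r ≤ n → Integrable (fun z : ℝ => z ^ n) μ) :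
    HasTay r (fun u => ∫ z, RT r (z * u) ∂μ) := by
  constructor
  · intro u hu
    obtain ⟨C, hC, h⟩ := RT_bd r
    have : ContinuousOn (fun u => ∫ z, RT r (z * u) ∂μ) (Icc 0 (u + 1)) := by
      refine continuousOn_of_dominated (bound := fun z => C * (u + 1) ^ r * z ^ r) ?_ ?_
        ((hi r le_rfl).const_mul _) ?_
      · intro x hx
        exact ((RT_cont r).comp (by fun_prop : Continuous fun z : ℝ => z * x)).aestronglyMeasurable
      · intro x hx
        filter_upwards [hpos] with z hz
        have hx0 := hx.1
        refine (h (z * x) (by positivity)).trans ?_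
        have : x ^ r ≤ (u + 1) ^ r := pow_le_pow_left₀ hx.1 hx.2 r
        calc C * (z * x) ^ r = C * x ^ r * z ^ r := by rw [mul_pow]; ring
          _ ≤ _ := by gcongr
      · refine Eventually.of_forall fun z => ?_
        exact ((RT_cont r).comp (by fun_prop : Continuous fun x : ℝ => z * x)).continuousOn
    have h3 := this u ⟨hu, by linarith⟩
    refine h3.mono_of_mem_nhdsWithin ?_
    have : Iio (u + 1) ∈ nhdsWithin u (Ici 0) := mem_nhdsWithin_of_mem_nhds (Iio_mem_nhds (by linarith))
    filter_upwards [this, self_mem_nhdsWithin] with y hy hy0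
    exact ⟨hy0, le_of_lt hy⟩
  · intro N
    obtain ⟨C, hC, h⟩ := RT_bd (r + (N + 1))
    refine ⟨fun k => ∫ z, (-z) ^ (k + r) / ((k + r).factorial : ℝ) ∂μ,
      C * |∫ z, z ^ (r + (N + 1)) ∂μ|, by positivity, fun u hu => ?_⟩
    have hik : ∀ k : ℕ, Integrable (fun z : ℝ => (-z) ^ (k + r) / ((k + r).factorial : ℝ) * u ^ (k + r)) μ := by
      intro k
      have := (hi (k + r) (by omega)).const_mul ((-1) ^ (k + r) / ((k + r).factorial : ℝ) * u ^ (k + r))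
      refine this.congr (Eventually.of_forall fun z => ?_)
      simp only
      rw [neg_pow z]; ring
    have e : (∫ z, RT r (z * u) ∂μ) - ∑ k ∈ Finset.range (N + 1),
        (∫ z, (-z) ^ (k + r) / ((k + r).factorial : ℝ) ∂μ) * u ^ (k + r)
        = ∫ z, RT (r + (N + 1)) (z * u) ∂μ := by
      simp_rw [← integral_mul_const]
      rw [← integral_finsetSum _ (fun k _ => hik k), ← integral_sub (RT_int r μ hpos r (hi r le_rfl) u hu)
        (integrable_finsetSum _ fun k _ => hik k)]
      refine integral_congr_ae (Eventually.of_forall fun z => ?_)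
      simp only [RT]
      rw [Finset.sum_range_add (fun k => (-(z * u)) ^ k / (k.factorial : ℝ)) r (N + 1), ← sub_sub]
      congr 1
      refine Finset.sum_congr rfl fun k _ => ?_
      rw [add_comm r k, ← neg_mul, mul_pow]; ring
    rw [e]
    have hb := norm_integral_le_of_norm_le (f := fun z => RT (r + (N + 1)) (z * u))
      ((hi (r + (N + 1)) (by omega)).const_mul (C * u ^ (r + (N + 1)))) (by
        filter_upwards [hpos] with z hz
        refine (h (z * u) (by positivity)).trans (le_of_eq ?_)
        rw [mul_pow]; ring)
    refine hb.trans ?_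
    rw [integral_const_mul, add_comm (N + 1) r]
    have := le_abs_self (∫ z, z ^ (r + (N + 1)) ∂μ)
    calc _ ≤ C * u ^ (r + (N + 1)) * |∫ z, z ^ (r + (N + 1)) ∂μ| := by gcongr
      _ = _ := by ring

lemma psi_tay (ψ : ℝ → ℝ) (h : ℝ) (ν : Measure ℝ) (hψ : IsImmigrationMechanism ψ h ν)
    (hmom : ∀ n : ℕ, 1 ≤ n → (∫⁻ z in Set.Ioi 1, ENNReal.ofReal (z ^ n) ∂ν) < ⊤) :
    HasTay 1 ψ := by
  have hpos : ∀ᵐ z ∂ν, 0 < z := by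
    rw [ae_iff]; simpa [Iic] using hψ.carrier
  have := RT_tay 1 ν hpos fun n hn => mom_int 1 ν hψ.carrier (by simpa using hψ.levy_finite) n hn
    (hmom n hn)
  refine ((HasTay.monom 1 h).add this.neg).congr fun u hu => ?_
  rw [hψ.form u hu, ← integral_neg]
  simp [RT, mul_comm]

lemma phi_tay (φ : ℝ → ℝ) (β σ : ℝ) (m : Measure ℝ) (hφ : IsBranchingMechanism φ β σ m)
    (hmom : ∀ n : ℕ, 1 ≤ n → (∫⁻ z in Set.Ioi 1, ENNReal.ofReal (z ^ n) ∂m) < ⊤) :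
    ∃ b : ℝ, ∃ g : ℝ → ℝ, (∀ u, 0 ≤ u → φ u = b * u + g u) ∧ (∀ u, 0 ≤ u → 0 ≤ g u) ∧
      HasTay 2 g := by
  have hpos : ∀ᵐ z ∂m, 0 < z := by
    rw [ae_iff]; simpa [Iic] using hφ.carrier
  have hi : ∀ n, 2 ≤ n → Integrable (fun z : ℝ => z ^ n) m := fun n hn =>
    mom_int 2 m hφ.carrier hφ.levy_finite n hn (hmom n (by omega))
  have ht := RT_tay 2 m hpos hi
  have hi1 : IntegrableOn (fun z : ℝ => z) (Ioi 1) m := by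
    refine ⟨by fun_prop, ?_⟩
    rw [hasFiniteIntegral_iff_ofReal (by
      filter_upwards [ae_restrict_of_ae hpos] with z hz; exact hz.le)]
    simpa using hmom 1 le_rfl
  have hi1' := hi1.integrable_indicator measurableSet_Ioi
  refine ⟨β - ∫ z in Ioi 1, z ∂m, fun u => σ ^ 2 / 2 * u ^ 2 + ∫ z, RT 2 (z * u) ∂m, ?_, ?_, ?_⟩
  · intro u hu
    rw [hφ.form u hu, ← integral_indicator measurableSet_Ioi]
    have e : ∫ z, (Real.exp (-(z * u)) - 1 + (if z ≤ 1 then z * u else 0)) ∂m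
        = (∫ z, RT 2 (z * u) ∂m) - (∫ z, (Ioi 1).indicator (fun z => z) z ∂m) * u := by
      rw [← integral_mul_const, ← integral_sub (RT_int 2 m hpos 2 (hi 2 le_rfl) u hu)
        (hi1'.mul_const u)]
      refine integral_congr_ae (Eventually.of_forall fun z => ?_)
      simp only [RT, indicator, mem_Ioi, Finset.sum_range_succ, Finset.sum_range_zero]
      by_cases hz : z ≤ 1
      · simp [hz, not_lt.2 hz]; ring
      · simp [hz, not_le.1 hz]; ring
    rw [e]; ring
  · intro u hu
    have : 0 ≤ ∫ z, RT 2 (z * u) ∂m := by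
      refine integral_nonneg fun z => ?_
      have := Real.add_one_le_exp (-(z * u))
      simp [RT, Finset.sum_range_succ]
      linarith
    positivity
  · exact (HasTay.monom 2 _).add ht

lemma mild (φ g w : ℝ → ℝ) (b l t : ℝ) (hg : ∀ u, 0 ≤ u → φ u = b * u + g u)
    (hgc : ContinuousOn g (Ici 0)) (ht : 0 ≤ t)
    (hw : ∀ s, 0 ≤ s → 0 ≤ w s ∧ w s = l - ∫ r in (0:ℝ)..s, φ (w r))
    (hi : IntervalIntegrable (fun s => φ (w s)) volume 0 t) :
    ContinuousOn w (Icc 0 t) ∧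
      Real.exp (b * t) * w t = l - ∫ s in (0:ℝ)..t, Real.exp (b * s) * g (w s) := by
  have hφc : ContinuousOn φ (Ici 0) := by
    have : ContinuousOn (fun u => b * u + g u) (Ici 0) :=
      (by fun_prop : Continuous fun u : ℝ => b * u).continuousOn.add hgc
    exact this.congr fun u hu => hg u hu
  have hwc : ContinuousOn w (Icc 0 t) := by
    have h1 := intervalIntegral.continuousOn_primitive_interval (a := 0) (b := t)
      (f := fun s => φ (w s)) (μ := volume)
      (by rw [uIcc_of_le ht]; exact (intervalIntegrable_iff_integrableOn_Icc_of_le ht).1 hi)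
    rw [uIcc_of_le ht] at h1
    exact (continuousOn_const.sub h1).congr fun s hs => (hw s hs.1).2
  have hmaps : MapsTo w (Icc 0 t) (Ici 0) := fun s hs => (hw s hs.1).1
  have hφw : ContinuousOn (fun s => φ (w s)) (Icc 0 t) := hφc.comp hwc hmaps
  have hgw : ContinuousOn (fun s => g (w s)) (Icc 0 t) := hgc.comp hwc hmaps
  refine ⟨hwc, ?_⟩
  have hd : ∀ s ∈ Ioo 0 t, HasDerivAt w (-φ (w s)) s := by
    intro s hs
    have h1 : HasDerivAt (fun u => ∫ r in (0:ℝ)..u, φ (w r)) (φ (w s)) s := by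
      refine intervalIntegral.integral_hasDerivAt_right ?_ ?_ ?_
      · refine hi.mono_set ?_
        rw [uIcc_of_le ht, uIcc_of_le hs.1.le]
        exact Icc_subset_Icc_right hs.2.le
      · exact ContinuousOn.stronglyMeasurableAtFilter isOpen_Ioo (hφw.mono Ioo_subset_Icc_self) s hs
      · exact hφw.continuousAt (Icc_mem_nhds hs.1 hs.2)
    have h2 := h1.const_sub l
    refine h2.congr_of_eventuallyEq ?_
    filter_upwards [Ioi_mem_nhds hs.1] with r hr
    exact (hw r (le_of_lt hr)).2
  have hd2 : ∀ s ∈ Ioo 0 t, HasDerivAt (fun s => Real.exp (b * s) * w s)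
      (-(Real.exp (b * s) * g (w s))) s := by
    intro s hs
    have he : HasDerivAt (fun s => Real.exp (b * s)) (Real.exp (b * s) * b) s := by
      simpa using ((hasDerivAt_id s).const_mul b).exp
    refine (he.mul (hd s hs)).congr_deriv ?_
    rw [hg _ (hw s hs.1.le).1]; ring
  have hec : Continuous fun s => Real.exp (b * s) := by fun_prop
  have h3 : (∫ s in (0:ℝ)..t, -(Real.exp (b * s) * g (w s)))
      = Real.exp (b * t) * w t - Real.exp (b * 0) * w 0 :=
    intervalIntegral.integral_eq_sub_of_hasDerivAt_of_le ht
    (hec.continuousOn.mul hwc) hd2 (by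
      refine ContinuousOn.intervalIntegrable ?_
      rw [uIcc_of_le ht]
      exact (hec.continuousOn.mul hgw).neg)
  rw [intervalIntegral.integral_neg] at h3
  have h0 : w 0 = l := by rw [(hw 0 le_rfl).2]; simp
  simp only [mul_zero, Real.exp_zero, one_mul, h0] at h3
  linarith

lemma w_bound (φ g w : ℝ → ℝ) (b l t T : ℝ) (hg : ∀ u, 0 ≤ u → φ u = b * u + g u)
    (hg0 : ∀ u, 0 ≤ u → 0 ≤ g u)
    (hgc : ContinuousOn g (Ici 0)) (ht : 0 ≤ t) (htT : t ≤ T)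
    (hw : ∀ s, 0 ≤ s → 0 ≤ w s ∧ w s = l - ∫ r in (0:ℝ)..s, φ (w r))
    (hi : IntervalIntegrable (fun s => φ (w s)) volume 0 t) :
    w t ≤ Real.exp (|b| * T) * l := by
  have h := (mild φ g w b l t hg hgc ht hw hi).2
  have h1 : 0 ≤ ∫ s in (0:ℝ)..t, Real.exp (b * s) * g (w s) := by
    refine intervalIntegral.integral_nonneg ht fun s hs => ?_
    exact mul_nonneg (Real.exp_pos _).le (hg0 _ (hw s hs.1).1)
  have h2 : Real.exp (b * t) * w t ≤ l := by linarith
  have hl : 0 ≤ l := (mul_nonneg (Real.exp_pos _).le (hw t ht).1).trans h2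
  have h3 : w t = Real.exp (-(b * t)) * (Real.exp (b * t) * w t) := by
    rw [← mul_assoc, ← Real.exp_add]; simp
  rw [h3]
  have h4 : -(b * t) ≤ |b| * T := by
    have := neg_abs_le b
    have := abs_nonneg b
    nlinarith
  have h5 := mul_nonneg (Real.exp_pos (b * t)).le (hw t ht).1
  gcongr

lemma w_int (φ g w : ℝ → ℝ) (b l T : ℝ) (hg : ∀ u, 0 ≤ u → φ u = b * u + g u)
    (hg0 : ∀ u, 0 ≤ u → 0 ≤ g u)
    (hgc : ContinuousOn g (Ici 0)) (hT : 0 ≤ T)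
    (hw : ∀ s, 0 ≤ s → 0 ≤ w s ∧ w s = l - ∫ r in (0:ℝ)..s, φ (w r)) :
    IntervalIntegrable (fun s => φ (w s)) volume 0 T := by
  by_contra hcon
  have hφc : ContinuousOn φ (Ici 0) := by
    have : ContinuousOn (fun u => b * u + g u) (Ici 0) :=
      (by fun_prop : Continuous fun u : ℝ => b * u).continuousOn.add hgc
    exact this.congr fun u hu => hg u hu
  set J : Set ℝ := {t | 0 ≤ t ∧ IntervalIntegrable (fun s => φ (w s)) volume 0 t} with hJ
  have hJT : ∀ t ∈ J, t ≤ T := by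
    intro t ht
    by_contra hlt
    push Not at hlt
    refine hcon (ht.2.mono_set ?_)
    rw [uIcc_of_le hT, uIcc_of_le ht.1]
    exact Icc_subset_Icc_right hlt.le
  have h0J : (0:ℝ) ∈ J := ⟨le_rfl, by simp⟩
  have hbdd : BddAbove J := ⟨T, hJT⟩
  set t0 := sSup J with ht0
  have ht00 : 0 ≤ t0 := le_csSup hbdd h0J
  have ht0T : t0 ≤ T := csSup_le ⟨0, h0J⟩ hJT
  have hdown : ∀ t, 0 ≤ t → t < t0 → t ∈ J := by
    intro t h1 h2
    obtain ⟨s, hs, hts⟩ := exists_lt_of_lt_csSup ⟨0, h0J⟩ h2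
    refine ⟨h1, hs.2.mono_set ?_⟩
    rw [uIcc_of_le h1, uIcc_of_le hs.1]
    exact Icc_subset_Icc_right hts.le
  -- bound
  obtain ⟨M, hM⟩ := isCompact_Icc.exists_bound_of_continuousOn
    (s := Icc (0:ℝ) (Real.exp (|b| * T) * l)) (hφc.mono fun u hu => hu.1)
  have hMb : ∀ t ∈ J, ‖φ (w t)‖ ≤ M := fun t ht => hM _ ⟨(hw t ht.1).1,
    w_bound φ g w b l t T hg hg0 hgc ht.1 (hJT t ht) hw ht.2⟩
  have hM0 : 0 ≤ M := (norm_nonneg _).trans (hMb 0 h0J)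
  have hI1 : IntegrableOn (fun s => φ (w s)) (Ioc 0 t0) volume := by
    rcases ht00.eq_or_lt with h | h
    · rw [← h]; simp
    obtain ⟨x, hxm, hx1, hx2⟩ := exists_seq_strictMono_tendsto' h
    have hxJ : ∀ n, x n ∈ J := fun n => hdown _ (hx1 n).1.le (hx1 n).2
    refine integrableOn_Ioc_of_intervalIntegral_norm_bounded_right (l := atTop) (b := x)
      (I := M * T) (fun n => ?_) hx2 (Eventually.of_forall fun n => ?_)
    · exact (intervalIntegrable_iff_integrableOn_Ioc_of_le (hxJ n).1).1 (hxJ n).2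
    · have h1 := norm_setIntegral_le_of_norm_le_const (μ := volume) (s := Ioc 0 (x n)) (C := M)
        (f := fun s => ‖φ (w s)‖) (by simp) (fun s hs => by
          rw [norm_norm]
          exact hMb s (hdown s hs.1.le (hs.2.trans_lt (hx1 n).2)))
      refine (le_abs_self _).trans (h1.trans ?_)
      have : volume.real (Ioc 0 (x n)) = x n := by
        simp [Real.volume_real_Ioc_of_le (hxJ n).1]
      rw [this]
      have := hJT _ (hxJ n)
      gcongr
  have hI2 : IntegrableOn (fun s => φ (w s)) (Ioc t0 T) volume := by
    have : IntegrableOn (fun _ : ℝ => φ l) (Ioc t0 T) volume := by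
      simp
    refine this.congr_fun (fun s hs => ?_) measurableSet_Ioc
    have hs0 : 0 ≤ s := ht00.trans hs.1.le
    have hsJ : ¬ IntervalIntegrable (fun s => φ (w s)) volume 0 s := fun hh =>
      absurd (le_csSup hbdd (show s ∈ J from ⟨hs0, hh⟩)) (not_le.2 hs.1)
    have := (hw s hs0).2
    rw [intervalIntegral.integral_undef hsJ, sub_zero] at this
    simp only [this]
  refine hcon ((intervalIntegrable_iff_integrableOn_Ioc_of_le hT).2 ?_)
  rw [← Ioc_union_Ioc_eq_Ioc ht00 ht0T]
  exact hI1.union hI2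

lemma Ex.comp_one {T : ℝ} {n : ℕ} {F : ℝ → ℝ → ℝ} (hF : Ex T n F) (B : ℝ) (hB : 0 ≤ B)
    (hb : ∀ t ∈ Icc (0:ℝ) T, ∀ l ∈ Icc (0:ℝ) 1, 0 ≤ F t l ∧ F t l ≤ B * l)
    {G : ℝ → ℝ} (hG : HasTay 1 G) : Ex T n (fun t l => G (F t l)) := by
  obtain ⟨c, C, hC, h⟩ := hG.2 n
  refine (Ex.sum (n + 1) (fun k t l => c k * F t l ^ (k + 1))
    (fun k => (Ex.const T n (c k)).mul (hF.pow (k + 1)))).near (C * B ^ (n + 1 + 1)) (by positivity)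
    fun t ht l hl => ?_
  obtain ⟨h0, h1⟩ := hb t ht l hl
  have hl0 := hl.1
  refine (h _ h0).trans ?_
  have h2 : F t l ^ (n + 1 + 1) ≤ (B * l) ^ (n + 1 + 1) := by gcongr
  have h3 : l ^ (n + 1 + 1) ≤ l ^ n := pow_le_pow_of_le_one hl.1 hl.2 (by omega)
  calc C * F t l ^ (n + 1 + 1) ≤ C * (B * l) ^ (n + 1 + 1) := by gcongr
    _ = C * B ^ (n + 1 + 1) * l ^ (n + 1 + 1) := by ring
    _ ≤ _ := by gcongr

lemma Ex.comp_two {T : ℝ} {n : ℕ} {F : ℝ → ℝ → ℝ} (hF : Ex T (n + 1) F) (B : ℝ) (hB : 0 ≤ B)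
    (hb : ∀ t ∈ Icc (0:ℝ) T, ∀ l ∈ Icc (0:ℝ) 1, 0 ≤ F t l ∧ F t l ≤ B * l)
    {G : ℝ → ℝ} (hG : HasTay 2 G) : Ex T (n + 2) (fun t l => G (F t l)) := by
  obtain ⟨c, C, hC, h⟩ := hG.2 n
  have hb' : ∀ t ∈ Icc (0:ℝ) T, ∀ l ∈ Icc (0:ℝ) 1, |F t l| ≤ B * l := fun t ht l hl => by
    rw [abs_of_nonneg (hb t ht l hl).1]; exact (hb t ht l hl).2
  refine (Ex.sum (n + 1) (fun k t l => c k * F t l ^ (k + 2))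
    (fun k => (Ex.const T _ (c k)).mul (hF.pow_gain B hB hb' k))).near (C * B ^ (n + 1 + 2))
    (by positivity) fun t ht l hl => ?_
  obtain ⟨h0, h1⟩ := hb t ht l hl
  have hl0 := hl.1
  refine (h _ h0).trans ?_
  have h3 : l ^ (n + 1 + 2) ≤ l ^ (n + 2) := pow_le_pow_of_le_one hl.1 hl.2 (by omega)
  calc C * F t l ^ (n + 1 + 2) ≤ C * (B * l) ^ (n + 1 + 2) := by gcongr
    _ = C * B ^ (n + 1 + 2) * l ^ (n + 1 + 2) := by ring
    _ ≤ _ := by gcongr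

lemma Ex.exp {T : ℝ} {n : ℕ} {F : ℝ → ℝ → ℝ} (hF : Ex T n F) (B : ℝ) (hB : 0 ≤ B)
    (hb : ∀ t ∈ Icc (0:ℝ) T, ∀ l ∈ Icc (0:ℝ) 1, |F t l| ≤ B * l) :
    Ex T n (fun t l => Real.exp (F t l)) := by
  refine (Ex.sum n (fun k t l => F t l ^ k / (k.factorial : ℝ)) (fun k => ?_)).near
    (B ^ n * Real.exp B) (by positivity) fun t ht l hl => ?_
  · simp_rw [div_eq_mul_inv]
    exact (hF.pow k).mul (Ex.const T n _)
  · refine (exp_tay_real _ n).trans ?_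
    have h1 := hb t ht l hl
    have h2 : |F t l| ≤ B := h1.trans (mul_le_of_le_one_right hB hl.2)
    have hl0 := hl.1
    calc _ ≤ (B * l) ^ n * Real.exp B := by gcongr
      _ = _ := by ring

lemma laplace_ex (φ ψ g : ℝ → ℝ) (b T x : ℝ) (hT : 0 ≤ T)
    (hg : ∀ u, 0 ≤ u → φ u = b * u + g u)
    (hg0 : ∀ u, 0 ≤ u → 0 ≤ g u) (hgt : HasTay 2 g) (hψt : HasTay 1 ψ)
    (v : ℝ → ℝ → ℝ) (hv : IsCumulant φ v) (n : ℕ) :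
    Ex T n (fun t l => Real.exp (-(x * v t l) - ∫ s in (0:ℝ)..t, ψ (v s l))) := by
  have hint : ∀ l, 0 ≤ l → ∀ t, 0 ≤ t → IntervalIntegrable (fun s => φ (v s l)) volume 0 t :=
    fun l hl t ht => w_int φ g (fun s => v s l) b l t hg hg0 hgt.1 ht (hv l hl)
  set B := Real.exp (|b| * T) with hBdef
  have hB : 0 ≤ B := (Real.exp_pos _).le
  have hb : ∀ t ∈ Icc (0:ℝ) T, ∀ l ∈ Icc (0:ℝ) 1, 0 ≤ v t l ∧ v t l ≤ B * l :=
    fun t ht l hl => ⟨(hv l hl.1 t ht.1).1,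
      w_bound φ g (fun s => v s l) b l t T hg hg0 hgt.1 ht.1 ht.2 (hv l hl.1) (hint l hl.1 t ht.1)⟩
  have hmild := fun l hl t ht => mild φ g (fun s => v s l) b l t hg hgt.1 ht (hv l hl) (hint l hl t ht)
  have hvcont : ∀ l, 0 ≤ l → ∀ t, 0 ≤ t → ContinuousOn (fun s => v s l) (Icc 0 t) :=
    fun l hl t ht => (hmild l hl t ht).1
  have hmaps : ∀ l, 0 ≤ l → ∀ t, MapsTo (fun s => v s l) (Icc 0 t) (Ici 0) :=
    fun l hl t s hs => (hv l hl s hs.1).1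
  have hvex : ∀ k, Ex T (k + 1) v := by
    intro k
    induction k with
    | zero =>
      refine ⟨0, B, hB, fun t ht l hl => ?_⟩
      rw [PE_zero, sub_zero, abs_of_nonneg (hb t ht l hl).1]
      simpa using (hb t ht l hl).2
    | succ k ih =>
      have h1 := ih.comp_two B hB hb hgt
      have h2 : Ex T (k + 2) (fun t l => Real.exp (b * t) * g (v t l)) :=
        (Ex.coef T (k + 2) ⟨fun t => Real.exp (b * t), by fun_prop⟩).mul h1
      have h3 := h2.int (fun t ht l hl => by
        refine ContinuousOn.intervalIntegrable ?_
        rw [uIcc_of_le ht.1]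
        exact (by fun_prop : Continuous fun t => Real.exp (b * t)).continuousOn.mul
          (hgt.1.comp (hvcont l hl.1 t ht.1) (hmaps l hl.1 t)))
      have h4 := (Ex.coef T (k + 2) ⟨fun t => Real.exp (-(b * t)), by fun_prop⟩).mul
        ((Ex.var T (k + 2)).add ((Ex.const T (k + 2) (-1)).mul h3))
      refine h4.congr fun t ht l hl => ?_
      have h5 := (hmild l hl.1 t ht.1).2
      have h6 : v t l = Real.exp (-(b * t)) * (Real.exp (b * t) * v t l) := by
        rw [← mul_assoc, ← Real.exp_add]; simp
      rw [h5] at h6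
      rw [h6]
      apply le_of_eq
      rw [abs_eq_zero]
      simp only [ContinuousMap.coe_mk]
      ring
  have hvn : Ex T n v := by
    cases n with
    | succ n => exact hvex n
    | zero =>
      refine ⟨0, B, hB, fun t ht l hl => ?_⟩
      rw [PE_zero, sub_zero, abs_of_nonneg (hb t ht l hl).1]
      simpa using (hb t ht l hl).2.trans (mul_le_of_le_one_right hB hl.2)
  have hψi : ∀ t ∈ Icc (0:ℝ) T, ∀ l ∈ Icc (0:ℝ) 1,
      IntervalIntegrable (fun s => ψ (v s l)) volume 0 t := fun t ht l hl => by
    refine ContinuousOn.intervalIntegrable ?_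
    rw [uIcc_of_le ht.1]
    exact hψt.1.comp (hvcont l hl.1 t ht.1) (hmaps l hl.1 t)
  have hψex := (hvn.comp_one B hB hb hψt).int hψi
  obtain ⟨c, C, hC, hc⟩ := hψt.2 0
  have hψb : ∀ t ∈ Icc (0:ℝ) T, ∀ l ∈ Icc (0:ℝ) 1, |ψ (v t l)| ≤ (|c 0| * B + C * B ^ 2) * l := by
    intro t ht l hl
    obtain ⟨h0, h1⟩ := hb t ht l hl
    have h2 := hc _ h0
    simp only [zero_add, Finset.sum_range_one, pow_one] at h2
    have e : ψ (v t l) = (ψ (v t l) - c 0 * v t l) + c 0 * v t l := by ring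
    rw [e]
    refine (abs_add_le _ _).trans ?_
    rw [abs_mul, abs_of_nonneg h0]
    have hl0 := hl.1
    have h3 : l ^ 2 ≤ l := by nlinarith [hl.1, hl.2]
    have h4 : v t l ^ (1 + 1) ≤ B ^ 2 * l := by
      calc v t l ^ (1 + 1) ≤ (B * l) ^ 2 := by gcongr
        _ = B ^ 2 * l ^ 2 := by ring
        _ ≤ _ := by gcongr
    calc _ ≤ C * (B ^ 2 * l) + |c 0| * (B * l) := by
          refine add_le_add (h2.trans ?_) ?_ <;> gcongr
      _ = _ := by ring
  set D := |c 0| * B + C * B ^ 2 with hD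
  have hD0 : 0 ≤ D := by positivity
  have hE : Ex T n (fun t l => -(x * v t l) - ∫ s in (0:ℝ)..t, ψ (v s l)) := by
    refine (((Ex.const T n (-x)).mul hvn).add ((Ex.const T n (-1)).mul hψex)).congr
      fun t ht l hl => ?_
    apply le_of_eq
    rw [abs_eq_zero]
    ring
  refine hE.exp (|x| * B + D * T) (by positivity) fun t ht l hl => ?_
  have hl0 := hl.1
  obtain ⟨h0, h1⟩ := hb t ht l hl
  have h2 := intervalIntegral.norm_integral_le_of_norm_le_const (a := 0) (b := t) (C := D * l)
    (f := fun s => ψ (v s l)) (fun s hs => by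
      rw [uIoc_of_le ht.1] at hs
      exact hψb s ⟨hs.1.le, hs.2.trans ht.2⟩ l hl)
  rw [sub_zero, abs_of_nonneg ht.1, Real.norm_eq_abs] at h2
  have h3 : |(-(x * v t l))| ≤ |x| * (B * l) := by
    rw [abs_neg, abs_mul, abs_of_nonneg h0]; gcongr
  refine (abs_sub _ _).trans ?_
  have h4 : D * l * t ≤ D * l * T := by
    have := ht.2
    gcongr
  linarith

lemma moment_le (n : ℕ) (Q : Measure ℝ) [IsProbabilityMeasure Q] (hQ : Q (Iio 0) = 0) (L : ℝ → ℝ)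
    (hL : ∀ l, 0 ≤ l → ∫ y, Real.exp (-(l * y)) ∂Q = L l) (C : ℝ)
    (hC : ∀ h : ℝ, 0 ≤ h → (n + 1) * h ≤ 1 → |FD n h L| ≤ C * h ^ n) :
    ∫⁻ y, ENNReal.ofReal (y ^ n) ∂Q ≤ ENNReal.ofReal C := by
  have hpos : ∀ᵐ z ∂Q, 0 ≤ z := by
    rw [ae_iff]; simpa [Iio] using hQ
  have hei : ∀ l, 0 ≤ l → Integrable (fun y => Real.exp (-(l * y))) Q := by
    intro l hl
    refine (integrable_const (1:ℝ)).mono' (by fun_prop) ?_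
    filter_upwards [hpos] with y hy
    rw [Real.norm_eq_abs, abs_of_pos (Real.exp_pos _)]
    exact Real.exp_le_one_iff.2 (by simp; positivity)
  have hexp : ∀ h y : ℝ, (1 - Real.exp (-(h * y))) ^ n
      = (-1) ^ n * FD n h (fun l => Real.exp (-(l * y))) := by
    intro h y
    have e : 1 - Real.exp (-(h * y)) = (-1) * (Real.exp (-(h * y)) + (-1)) := by ring
    rw [e, mul_pow, add_pow, FD]
    congr 1
    refine Finset.sum_congr rfl fun k _ => ?_
    rw [← Real.exp_nat_mul]
    push_cast
    have : (k:ℝ) * -(h * y) = -(k * h * y) := by ring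
    rw [this]; ring
  have hFDint : ∀ h : ℝ, 0 ≤ h →
      ∫ y, FD n h (fun l => Real.exp (-(l * y))) ∂Q = FD n h L := by
    intro h hh
    unfold FD
    rw [integral_finsetSum _ (fun k _ => (hei _ (by positivity)).const_mul _)]
    refine Finset.sum_congr rfl fun k _ => ?_
    rw [integral_const_mul, hL _ (by positivity)]
  have hFDi : ∀ h : ℝ, 0 ≤ h → Integrable (fun y => FD n h (fun l => Real.exp (-(l * y)))) Q := by
    intro h hh
    unfold FD
    exact integrable_finsetSum _ (fun k _ => (hei _ (by positivity)).const_mul _)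
  have hstep : ∀ h : ℝ, 0 < h → (n + 1) * h ≤ 1 →
      ∫⁻ y, ENNReal.ofReal (((1 - Real.exp (-(h * y))) / h) ^ n) ∂Q ≤ ENNReal.ofReal C := by
    intro h hh h1
    have hnn : ∀ᵐ y ∂Q, 0 ≤ ((1 - Real.exp (-(h * y))) / h) ^ n := by
      filter_upwards [hpos] with y hy
      have : Real.exp (-(h * y)) ≤ 1 := Real.exp_le_one_iff.2 (by simp; positivity)
      have : 0 ≤ 1 - Real.exp (-(h * y)) := by linarith
      positivity
    have e : (fun y => ((1 - Real.exp (-(h * y))) / h) ^ n)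
        = fun y => ((-1) ^ n / h ^ n) * FD n h (fun l => Real.exp (-(l * y))) := by
      ext y; rw [div_pow, hexp]; ring
    have hint : Integrable (fun y => ((1 - Real.exp (-(h * y))) / h) ^ n) Q := by
      rw [e]; exact (hFDi h hh.le).const_mul _
    rw [← ofReal_integral_eq_lintegral_ofReal hint hnn]
    refine ENNReal.ofReal_le_ofReal ?_
    rw [e, integral_const_mul, hFDint h hh.le]
    refine (le_abs_self _).trans ?_
    rw [abs_mul, abs_div, abs_pow, abs_neg, abs_one, one_pow, abs_of_pos (pow_pos hh n)]
    have h2 := hC h hh.le h1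
    rw [one_div, inv_mul_le_iff₀ (by positivity), mul_comm]
    exact h2
  set hs : ℕ → ℝ := fun k => 1 / ((n + 1 : ℝ) * (k + 1)) with hhs
  have hspos : ∀ k, 0 < hs k := fun k => by simp only [hhs]; positivity
  have hs0 : Tendsto hs atTop (nhds 0) := by
    have h1 := (tendsto_one_div_add_atTop_nhds_zero_nat (𝕜 := ℝ)).const_mul (1 / (n + 1 : ℝ))
    rw [mul_zero] at h1
    refine h1.congr fun k => ?_
    simp only [hhs]; rw [one_div_mul_one_div]
  have hlim : ∀ y : ℝ, Tendsto (fun k => ENNReal.ofReal (((1 - Real.exp (-(hs k * y))) / hs k) ^ n))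
      atTop (nhds (ENNReal.ofReal (y ^ n))) := by
    intro y
    refine (ENNReal.continuous_ofReal.tendsto _).comp ?_
    refine Tendsto.pow ?_ n
    have hd : HasDerivAt (fun h : ℝ => - Real.exp (-(h * y))) y 0 := by
      have := (((hasDerivAt_id (0:ℝ)).mul_const y).neg.exp).neg
      refine HasDerivAt.congr_deriv (this : HasDerivAt (fun h : ℝ => - Real.exp (-(h * y))) _ 0) ?_
      simp
    have h2 := hd.tendsto_slope
    have h3 : Tendsto hs atTop (nhdsWithin 0 {0}ᶜ) :=
      tendsto_nhdsWithin_iff.2 ⟨hs0, Eventually.of_forall fun k => (hspos k).ne'⟩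
    refine (h2.comp h3).congr fun k => ?_
    simp [slope_def_field]
    ring
  calc ∫⁻ y, ENNReal.ofReal (y ^ n) ∂Q
      = ∫⁻ y, liminf (fun k => ENNReal.ofReal (((1 - Real.exp (-(hs k * y))) / hs k) ^ n)) atTop ∂Q :=
        lintegral_congr fun y => (hlim y).liminf_eq.symm
    _ ≤ liminf (fun k => ∫⁻ y, ENNReal.ofReal (((1 - Real.exp (-(hs k * y))) / hs k) ^ n) ∂Q) atTop :=
        lintegral_liminf_le fun k => by fun_prop
    _ ≤ ENNReal.ofReal C := by
        refine liminf_le_of_frequently_le' (Frequently.of_forall fun k => hstep _ (hspos k) ?_)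
        simp only [hhs]
        rw [mul_one_div, div_le_one (by positivity)]
        have : (0:ℝ) ≤ (n + 1 : ℝ) * k := by positivity
        linarith

lemma condB_growth (f : ℝ → ℝ) (K : ℝ) (hf : ConditionB f K) :
    ∃ p : ℕ, ∃ A : ℝ, 0 ≤ A ∧ ∀ y, 0 ≤ y → f y ≤ A + A * y ^ p := by
  obtain ⟨hK, -, hmono, hsub, hone⟩ := hf
  have hf1 := hone 1 zero_le_one
  have hf2 := hone 2 zero_le_two
  obtain ⟨p, hp⟩ := pow_unbounded_of_one_lt (K * f 2) (one_lt_two (α := ℝ))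
  have hpow : ∀ j : ℕ, f (2 ^ j) ≤ (2 ^ p) ^ j * f 1 := by
    intro j
    induction j with
    | zero => simp
    | succ j ih =>
      have h1 := hsub 2 (2 ^ j) zero_le_two (by positivity)
      have h2 := hone (2 ^ j) (by positivity)
      rw [pow_succ' (2:ℝ) j, pow_succ' ((2:ℝ) ^ p) j, mul_assoc]
      refine h1.trans ?_
      have : 0 < K * f 2 := by positivity
      gcongr
  refine ⟨p, 2 ^ p * f 1, by positivity, fun y hy => ?_⟩
  rcases le_total y 1 with h | h
  · have h1 := hmono hy (show (1:ℝ) ∈ Ici 0 from mem_Ici.2 zero_le_one) h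
    have h2 : (1:ℝ) ≤ 2 ^ p := one_le_pow₀ one_le_two
    have h3 : 0 ≤ 2 ^ p * f 1 * y ^ p := by positivity
    nlinarith
  · obtain ⟨j, hj1, hj2⟩ := exists_nat_pow_near h one_lt_two
    have h1 := hmono hy (show (2:ℝ) ^ (j + 1) ∈ Ici 0 by simp [mem_Ici]) hj2.le
    have h2 := hpow (j + 1)
    have h3 : ((2:ℝ) ^ p) ^ j ≤ y ^ p := by
      rw [← pow_mul, mul_comm, pow_mul]; gcongr
    have h4 : 0 ≤ 2 ^ p * f 1 := by positivity
    calc f y ≤ (2 ^ p) ^ (j + 1) * f 1 := h1.trans h2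
      _ = 2 ^ p * f 1 * (2 ^ p) ^ j := by ring
      _ ≤ 2 ^ p * f 1 * y ^ p := by gcongr
      _ ≤ _ := by linarith

/-- Lemma 4.4: if `m + ν` has finite moments of every order on `(1,∞)`, then
for every `x ≥ 0` the function `t ↦ ∫ f dQ^γ_t(x,·)` is finite and locally
bounded on `[0,∞)`. -/
theorem cbi_f_moment_locally_bounded_poly
    (f : ℝ → ℝ) (K : ℝ) (hf : ConditionB f K)
    (φ : ℝ → ℝ) (β σ : ℝ) (m : Measure ℝ)
    (hφ : IsBranchingMechanism φ β σ m) (hGrey : GreyCondition φ)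
    (ψ : ℝ → ℝ) (h : ℝ) (ν : Measure ℝ)
    (hψ : IsImmigrationMechanism ψ h ν)
    (hmν : ∀ n : ℕ, 1 ≤ n →
      (∫⁻ z in Set.Ioi 1, ENNReal.ofReal (z ^ n) ∂(m + ν)) < ⊤)
    (v : ℝ → ℝ → ℝ) (hv : IsCumulant φ v)
    (Qγ : ℝ → ℝ → Measure ℝ) (hQγ : IsCBISemigroup v ψ Qγ)
    (x : ℝ) (hx : 0 ≤ x) :
    (∀ t, 0 ≤ t → (∫⁻ z, ENNReal.ofReal (f z) ∂(Qγ t x)) < ⊤) ∧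
      ∀ T, 0 < T → ∃ C : ℝ, ∀ t ∈ Set.Icc (0:ℝ) T,
        (∫⁻ z, ENNReal.ofReal (f z) ∂(Qγ t x)) ≤ ENNReal.ofReal C := by
  have hm : ∀ n : ℕ, 1 ≤ n → (∫⁻ z in Set.Ioi 1, ENNReal.ofReal (z ^ n) ∂m) < ⊤ := fun n hn => by
    refine lt_of_le_of_lt ?_ (hmν n hn)
    rw [Measure.restrict_add, lintegral_add_measure]; exact le_self_add
  have hn : ∀ n : ℕ, 1 ≤ n → (∫⁻ z in Set.Ioi 1, ENNReal.ofReal (z ^ n) ∂ν) < ⊤ := fun n hn => by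
    refine lt_of_le_of_lt ?_ (hmν n hn)
    rw [Measure.restrict_add, lintegral_add_measure]; exact le_add_self
  obtain ⟨b, g, hg, hg0, hgt⟩ := phi_tay φ β σ m hφ hm
  have hψt := psi_tay ψ h ν hψ hn
  obtain ⟨p, A, hA, hgrow⟩ := condB_growth f K hf
  have main : ∀ T, 0 < T → ∃ C : ℝ, ∀ t ∈ Set.Icc (0:ℝ) T,
        (∫⁻ z, ENNReal.ofReal (f z) ∂(Qγ t x)) ≤ ENNReal.ofReal C := by
    intro T hT
    obtain ⟨C, hC, hFD⟩ := (laplace_ex φ ψ g b T x hT.le hg hg0 hgt hψt v hv p).FD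
    refine ⟨A + A * C, fun t ht => ?_⟩
    obtain ⟨hprob, hsupp, hlap⟩ := hQγ t x ht.1 hx
    have hmom := moment_le p (Qγ t x) hsupp _ hlap C (hFD t ht)
    have hpos : ∀ᵐ z ∂(Qγ t x), 0 ≤ z := by
      rw [ae_iff]; simpa [Iio] using hsupp
    calc ∫⁻ z, ENNReal.ofReal (f z) ∂(Qγ t x)
        ≤ ∫⁻ z, (ENNReal.ofReal A + ENNReal.ofReal A * ENNReal.ofReal (z ^ p)) ∂(Qγ t x) := by
          refine lintegral_mono_ae ?_
          filter_upwards [hpos] with z hz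
          rw [← ENNReal.ofReal_mul hA, ← ENNReal.ofReal_add hA (by positivity)]
          exact ENNReal.ofReal_le_ofReal (hgrow z hz)
      _ = ENNReal.ofReal A + ENNReal.ofReal A * ∫⁻ z, ENNReal.ofReal (z ^ p) ∂(Qγ t x) := by
          rw [lintegral_add_left (by fun_prop), lintegral_const_mul _ (by fun_prop)]
          simp
      _ ≤ ENNReal.ofReal A + ENNReal.ofReal A * ENNReal.ofReal C := by gcongr
      _ = ENNReal.ofReal (A + A * C) := by
          rw [← ENNReal.ofReal_mul hA, ← ENNReal.ofReal_add hA (by positivity)]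
  refine ⟨fun t ht => ?_, main⟩
  obtain ⟨C, hC⟩ := main (t + 1) (by linarith)
  exact (hC t ⟨ht, by linarith⟩).trans_lt ENNReal.ofReal_lt_top
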